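/- Let d ≥ 1 be an integer and let f : ℝ^d → ℝ be a smooth bounded function. Let 1 ≤ i ≤ m be integers with i < m − d/2, and set θ = i/(m − d/2). Let I_{−1} = [0,1] and I_j = [2^{j}, 2^{j+1}] for j ≥ 0, and let φ : ℝ^d → [0,∞) be a weight for which there exist values φ_j (j ≥ −1) and a constant C ≥ 1 with φ(x) ∈ [φ_j/C, Cφ_j] whenever |x| ∈ I_j, and φ_{−1} = φ_0 = 1. Assume ‖ φ^m |∇^m f| ‖_{L²(ℝ^d)} < ∞. Then there is a constant C′ depending only on d, i, m, C (and not on f or φ) such that for every x ∈ ℝ^d with φ(x) > 0: |∇^i f(x)| ≤ C′ ( ‖f‖_{L^∞}^{1−θ} ‖ φ^m |∇^m f| ‖_{L²}^{θ} φ(x)^{−mθ} + ‖f‖_{L^∞} ⟨x⟩^{−i} ), where ⟨x⟩ = (1+|x|²)^{1/2}. -/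

import Mathlib

open MeasureTheory
open scoped ENNReal

noncomputable section

/-
Integrating by parts along a ray against the kernel `K(t) = t ^ n χ(t)` expresses `n! Df(x)w`
through the integrals over `t` of `K⁽ⁿ⁺²⁾(t) f(x + tw)` and `K(t) D^{n + 2} f(x + tw)(w, …, w)`.
Averaging over directions `w` in a ball and applying Hölder's inequality to the ball of radius `∼ t`
swept at time `t` leaves `∫ t ^ (n - d / q) dt`, which converges exactly when `1 < m - d / q` with
`m = n + 2`. Iteration bounds `D^i f(x)` by the sup norm of `f` and the `L^q` norm of `D^m f` on a
unit ball whenever `i < a = m - d / q`, and dilation turns this into `M r ^ (-i) + N r ^ (a - i)` on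
a ball of radius `r`; optimising over `r ≤ R` gives the interpolated term and the boundary term
`M R ^ (-i)`. The weight enters only through the choice `R = ⟨x⟩ / 4`: a ball of this radius around
`x` meets only shells equal or adjacent to one containing `x`, and adjacent shells share a sphere,
so `φ` is comparable to `φ x` on the ball.
-/

open Set Metric Module
open scoped NNReal

section Kernel

open scoped Nat

variable {F : Type*} [NormedAddCommGroup F] [NormedSpace ℝ F]

theorem integral_smul_eq_sum_add_integral_of_hasDerivAt [CompleteSpace F]
    {u : ℕ → ℝ → ℝ} {v : ℕ → ℝ → F} {n : ℕ} (a b : ℝ)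
    (hu : ∀ l t, HasDerivAt (u l) (u (l + 1) t) t)
    (hv : ∀ l < n, ∀ t, HasDerivAt (v l) (v (l + 1) t) t) (hvn : Continuous (v n)) :
    ∫ t in a..b, u 0 t • v n t =
      ∑ l ∈ Finset.range n,
        (-1 : ℝ) ^ l • (u l b • v (n - (l + 1)) b - u l a • v (n - (l + 1)) a) +
        (-1 : ℝ) ^ n • ∫ t in a..b, u n t • v 0 t := by
  induction n generalizing u with
  | zero => simp
  | succ n ih =>
    have hu₁ : Continuous (u 1) := continuous_iff_continuousAt.2 fun t ↦ (hu 1 t).continuousAt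
    have hvc : Continuous (v n) :=
      continuous_iff_continuousAt.2 fun t ↦ (hv n n.lt_succ_self t).continuousAt
    have hparts := intervalIntegral.integral_smul_deriv_eq_deriv_smul (a := a) (b := b)
      (fun t _ ↦ hu 0 t) (fun t _ ↦ hv n n.lt_succ_self t)
      (hu₁.intervalIntegrable a b) (hvn.intervalIntegrable a b)
    have hrest := ih (u := fun l ↦ u (l + 1)) (fun l t ↦ hu (l + 1) t)
      (fun l hl t ↦ hv l (hl.trans n.lt_succ_self) t) hvc
    rw [hparts, hrest, Finset.sum_range_succ']
    simp only [pow_succ, mul_neg_one, neg_smul, Finset.sum_neg_distrib, Nat.add_sub_add_right,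
      pow_zero, one_smul, Nat.sub_zero]
    abel

/-- The monomial `t ^ n` cut off smoothly between `t = 1 / 3` and `t = 2 / 3`: the kernel of the
integral representation of a first derivative along a ray. Its only nonzero derivative at the two
ends of `[0, 1]` is the `n`-th one at `0`. -/
def cutoffPow (n : ℕ) (t : ℝ) : ℝ :=
  t ^ n * Real.smoothTransition (2 - 3 * t)

theorem contDiff_cutoffPow (n : ℕ) {k : ℕ∞} : ContDiff ℝ k (cutoffPow n) :=
  (contDiff_id.pow n).mul (Real.smoothTransition.contDiff.comp (by fun_prop))

theorem hasDerivAt_iteratedDeriv_cutoffPow (n l : ℕ) (t : ℝ) :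
    HasDerivAt (iteratedDeriv l (cutoffPow n)) (iteratedDeriv (l + 1) (cutoffPow n) t) t := by
  rw [iteratedDeriv_succ]
  exact ((contDiff_cutoffPow n (k := ⊤)).differentiable_iteratedDeriv l
    (by exact_mod_cast ENat.natCast_lt_top l) t).hasDerivAt

theorem iteratedDeriv_cutoffPow_zero (n l : ℕ) :
    iteratedDeriv l (cutoffPow n) 0 = if l = n then (n ! : ℝ) else 0 := by
  have hpow : cutoffPow n =ᶠ[nhds 0] fun t ↦ t ^ n := by
    filter_upwards [Iio_mem_nhds (show (0 : ℝ) < 1 / 3 by norm_num)] with t ht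
    rw [cutoffPow, Real.smoothTransition.one_of_one_le (by linarith [mem_Iio.1 ht]), mul_one]
  rw [hpow.iteratedDeriv_eq, iteratedDeriv_fun_pow_zero]
  exact_mod_cast rfl

theorem iteratedDeriv_cutoffPow_one (n l : ℕ) : iteratedDeriv l (cutoffPow n) 1 = 0 := by
  have hzero : cutoffPow n =ᶠ[nhds 1] fun _ ↦ 0 := by
    filter_upwards [Ioi_mem_nhds (show (2 / 3 : ℝ) < 1 by norm_num)] with t ht
    rw [cutoffPow, Real.smoothTransition.zero_of_nonpos (by linarith [mem_Ioi.1 ht]), mul_zero]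
  rw [hzero.iteratedDeriv_eq]
  simp

theorem abs_cutoffPow_le (n : ℕ) {t : ℝ} (ht : 0 ≤ t) : |cutoffPow n t| ≤ t ^ n := by
  rw [cutoffPow, abs_mul, abs_of_nonneg (pow_nonneg ht n),
    abs_of_nonneg (Real.smoothTransition.nonneg _)]
  exact mul_le_of_le_one_right (pow_nonneg ht n) (Real.smoothTransition.le_one _)

theorem exists_enorm_iteratedDeriv_cutoffPow_le (n l : ℕ) :
    ∃ B : ℝ≥0, ∀ t ∈ Icc (0 : ℝ) 1, ‖iteratedDeriv l (cutoffPow n) t‖ₑ ≤ B := by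
  have hcont : Continuous (iteratedDeriv l (cutoffPow n)) :=
    continuous_iff_continuousAt.2 fun t ↦ (hasDerivAt_iteratedDeriv_cutoffPow n l t).continuousAt
  obtain ⟨B, hB⟩ := isCompact_Icc.exists_bound_of_continuousOn hcont.continuousOn
  refine ⟨B.toNNReal, fun t ht ↦ ?_⟩
  rw [← ofReal_norm]
  exact ENNReal.ofReal_le_ofReal (hB t ht)
theorem enorm_integral_cutoffPow_smul_le (n : ℕ) (g : ℝ → F) :
    ‖∫ t in (0 : ℝ)..1, cutoffPow n t • g t‖ₑ ≤
      ∫⁻ t in Ioc (0 : ℝ) 1, .ofReal (t ^ n) * ‖g t‖ₑ := by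
  rw [intervalIntegral.integral_of_le zero_le_one]
  refine (enorm_integral_le_lintegral_enorm _).trans
    (setLIntegral_mono' measurableSet_Ioc fun t ht ↦ ?_)
  rw [enorm_smul, Real.enorm_eq_ofReal_abs]
  gcongr
  exact abs_cutoffPow_le n ht.1.le

end Kernel

section Ray

open scoped Nat

variable {E F : Type*} [NormedAddCommGroup E] [NormedSpace ℝ E]
  [NormedAddCommGroup F] [NormedSpace ℝ F]

theorem hasDerivAt_iteratedFDeriv_add_smul {f : E → F} {l : ℕ} (hf : ContDiff ℝ (l + 1) f)
    (x w : E) (t : ℝ) :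
    HasDerivAt (fun s : ℝ ↦ iteratedFDeriv ℝ l f (x + s • w) fun _ ↦ w)
      (iteratedFDeriv ℝ (l + 1) f (x + t • w) fun _ ↦ w) t := by
  have hdiff : Differentiable ℝ (iteratedFDeriv ℝ l f) :=
    hf.differentiable_iteratedFDeriv (by exact_mod_cast l.lt_succ_self)
  have hcomp : DifferentiableAt ℝ
      (fun s : ℝ ↦ iteratedFDeriv ℝ l f (x + s • w) fun _ ↦ w) t := by
    fun_prop
  rw [← hf.contDiffAt.deriv_fderiv_add_smul]
  exact hcomp.hasDerivAt

theorem factorial_smul_fderiv_eq_sub_integral [CompleteSpace F] {f : E → F} (n : ℕ)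
    (hf : ContDiff ℝ (n + 2 : ℕ) f) (x w : E) :
    (n ! : ℝ) • fderiv ℝ f x w =
      (∫ t in (0 : ℝ)..1, iteratedDeriv (n + 2) (cutoffPow n) t • f (x + t • w)) -
        (-1 : ℝ) ^ n •
          ∫ t in (0 : ℝ)..1, cutoffPow n t • iteratedFDeriv ℝ (n + 2) f (x + t • w) fun _ ↦ w := by
  have hparts := integral_smul_eq_sum_add_integral_of_hasDerivAt (n := n + 2)
    (u := fun l ↦ iteratedDeriv l (cutoffPow n))
    (v := fun l t ↦ iteratedFDeriv ℝ l f (x + t • w) fun _ ↦ w) 0 1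
    (hasDerivAt_iteratedDeriv_cutoffPow n)
    (fun l hl ↦ hasDerivAt_iteratedFDeriv_add_smul (hf.of_le (by exact_mod_cast hl)) x w)
    (((hf.continuous_iteratedFDeriv le_rfl).comp (by fun_prop)).eval_const _)
  have hfirst (y : E) :
      (iteratedFDeriv ℝ (n + 2 - (n + 1)) f y fun _ ↦ w) = fderiv ℝ f y w := by
    rw [show n + 2 - (n + 1) = 1 by lia, iteratedFDeriv_one_apply]
  rw [Finset.sum_eq_single n (by
    intro l _ hl
    simp [iteratedDeriv_cutoffPow_one, iteratedDeriv_cutoffPow_zero, hl]) (by simp)] at hparts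
  simp only [iteratedDeriv_zero, iteratedDeriv_cutoffPow_one, iteratedDeriv_cutoffPow_zero,
    if_true, zero_smul, zero_sub, add_zero, iteratedFDeriv_zero_apply, hfirst] at hparts
  have hsign : (-1 : ℝ) ^ n * (-1) ^ n = 1 := by rw [← mul_pow]; norm_num
  rw [hparts, pow_add, neg_one_sq, mul_one, smul_neg, ← sub_eq_neg_add, smul_sub,
    smul_smul, smul_smul, hsign, one_smul, one_smul, sub_sub_cancel]

theorem enorm_multilinear_apply_const_le {k : ℕ} (T : E [×k]→L[ℝ] F) (w : E) :
    ‖T fun _ ↦ w‖ₑ ≤ ‖w‖ₑ ^ k * ‖T‖ₑ := by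
  simpa [enorm_eq_nnnorm, mul_comm] using ENNReal.coe_le_coe.2 (T.le_opNNNorm fun _ ↦ w)

theorem exists_enorm_fderiv_apply_le [CompleteSpace F] (n : ℕ) (ρ : ℝ≥0) :
    ∃ A : ℝ≥0, ∀ f : E → F, ContDiff ℝ (n + 2 : ℕ) f → ∀ (x w : E) (M : ℝ≥0∞), ‖w‖ₑ ≤ ρ →
      (∀ t ∈ Icc (0 : ℝ) 1, ‖f (x + t • w)‖ₑ ≤ M) →
      ‖fderiv ℝ f x w‖ₑ ≤ A * (M + ∫⁻ t in Ioc (0 : ℝ) 1,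
        .ofReal (t ^ n) * ‖iteratedFDeriv ℝ (n + 2) f (x + t • w)‖ₑ) := by
  obtain ⟨B, hB⟩ := exists_enorm_iteratedDeriv_cutoffPow_le n (n + 2)
  refine ⟨B + ρ ^ (n + 2), fun f hf x w M hw hM ↦ ?_⟩
  set I := ∫⁻ t in Ioc (0 : ℝ) 1,
    .ofReal (t ^ n) * ‖iteratedFDeriv ℝ (n + 2) f (x + t • w)‖ₑ
  have hlow : ‖∫ t in (0 : ℝ)..1, iteratedDeriv (n + 2) (cutoffPow n) t • f (x + t • w)‖ₑ ≤
      B * M := by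
    rw [intervalIntegral.integral_of_le zero_le_one]
    refine (enorm_integral_le_lintegral_enorm _).trans ?_
    calc ∫⁻ t in Ioc (0 : ℝ) 1, ‖iteratedDeriv (n + 2) (cutoffPow n) t • f (x + t • w)‖ₑ
        ≤ ∫⁻ _ in Ioc (0 : ℝ) 1, B * M := by
          refine setLIntegral_mono measurable_const fun t ht ↦ ?_
          rw [enorm_smul]
          exact mul_le_mul' (hB t (Ioc_subset_Icc_self ht)) (hM t (Ioc_subset_Icc_self ht))
      _ = B * M := by simp
  have hhigh : ‖∫ t in (0 : ℝ)..1,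
      cutoffPow n t • iteratedFDeriv ℝ (n + 2) f (x + t • w) fun _ ↦ w‖ₑ ≤ ρ ^ (n + 2) * I := by
    refine (enorm_integral_cutoffPow_smul_le n _).trans ?_
    rw [← lintegral_const_mul' _ _ (by simp)]
    refine lintegral_mono fun t ↦ ?_
    rw [mul_left_comm]
    gcongr
    exact (enorm_multilinear_apply_const_le _ w).trans (by gcongr)
  calc ‖fderiv ℝ f x w‖ₑ ≤ ‖(n ! : ℝ) • fderiv ℝ f x w‖ₑ := by
        rw [enorm_smul]
        refine le_mul_of_one_le_left' ?_
        simpa using Nat.one_le_iff_ne_zero.2 n.factorial_ne_zero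
    _ ≤ B * M + ρ ^ (n + 2) * I := by
        rw [factorial_smul_fderiv_eq_sub_integral n hf]
        exact enorm_sub_le.trans (add_le_add hlow (by simpa [enorm_smul] using hhigh))
    _ ≤ (B + ρ ^ (n + 2) : ℝ≥0) * (M + I) := by
        push_cast
        rw [add_mul, mul_add, mul_add]
        exact add_le_add le_self_add le_add_self

end Ray

/-- The Sobolev number (differential dimension) `m - d / q` of the space `W^{m, q}(E)`, where `d` is
the dimension of `E`. The quotient is written with the inverse in `ℝ≥0∞`, so that it vanishes for
`q = ∞`. -/
def sobolevNumber (E : Type*) [AddCommGroup E] [Module ℝ E] (m : ℕ) (q : ℝ≥0∞) : ℝ :=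
  m - finrank ℝ E * q⁻¹.toReal

theorem sobolevNumber_add (E : Type*) [AddCommGroup E] [Module ℝ E] (m k : ℕ) (q : ℝ≥0∞) :
    sobolevNumber E (m + k) q = sobolevNumber E m q + k := by
  simp only [sobolevNumber, Nat.cast_add]
  ring

theorem sobolevNumber_le (E : Type*) [AddCommGroup E] [Module ℝ E] (m : ℕ) (q : ℝ≥0∞) :
    sobolevNumber E m q ≤ m :=
  sub_le_self _ (by positivity)

theorem sobolevNumber_euclideanSpace_two (d m : ℕ) :
    sobolevNumber (EuclideanSpace ℝ (Fin d)) m 2 = m - d / 2 := by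
  rw [sobolevNumber, finrank_euclideanSpace_fin, ENNReal.toReal_inv, ENNReal.toReal_ofNat,
    div_eq_mul_inv]

section Average

variable {E F : Type*} [NormedAddCommGroup E] [NormedSpace ℝ E]
  [MeasurableSpace E] [BorelSpace E] (μ : Measure E) [μ.IsAddHaarMeasure]
  [NormedAddCommGroup F]

theorem measure_closedBall_mul_enorm_apply_le [NormedSpace ℝ F] (T : E →L[ℝ] F) {ρ : ℝ} {v : E}
    (hv : ‖v‖ ≤ ρ / 2) :
    μ (closedBall 0 (ρ / 2)) * ‖T v‖ₑ ≤ 2 * ∫⁻ w in closedBall 0 ρ, ‖T w‖ₑ ∂μ := by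
  have hshift : ∫⁻ w in closedBall 0 (ρ / 2), ‖T (v + w)‖ₑ ∂μ ≤
      ∫⁻ w in closedBall 0 ρ, ‖T w‖ₑ ∂μ := by
    rw [(measurePreserving_add_left μ v).setLIntegral_comp_emb (measurableEmbedding_addLeft v)
      (fun w ↦ ‖T w‖ₑ)]
    refine lintegral_mono_set (image_subset_iff.2 fun w hw ↦ ?_)
    rw [mem_closedBall_zero_iff] at hw
    exact mem_closedBall_zero_iff.2 (by linarith [norm_add_le v w])
  have hmono : ∫⁻ w in closedBall 0 (ρ / 2), ‖T w‖ₑ ∂μ ≤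
      ∫⁻ w in closedBall 0 ρ, ‖T w‖ₑ ∂μ :=
    lintegral_mono_set (closedBall_subset_closedBall (by linarith [norm_nonneg v]))
  calc μ (closedBall 0 (ρ / 2)) * ‖T v‖ₑ
      = ∫⁻ _ in closedBall 0 (ρ / 2), ‖T v‖ₑ ∂μ := by simp [mul_comm]
    _ ≤ ∫⁻ w in closedBall 0 (ρ / 2), (‖T (v + w)‖ₑ + ‖T w‖ₑ) ∂μ := by
        refine lintegral_mono fun w ↦ ?_
        simpa using enorm_sub_le (a := T (v + w)) (b := T w)
    _ ≤ _ := by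
        rw [lintegral_add_right _ T.continuous.enorm.measurable, two_mul]
        exact add_le_add hshift hmono

theorem exists_enorm_le_mul_lintegral_closedBall [FiniteDimensional ℝ E] [NormedSpace ℝ F]
    {ρ : ℝ} (hρ : 0 < ρ) :
    ∃ A : ℝ≥0, ∀ T : E →L[ℝ] F, ‖T‖ₑ ≤ A * ∫⁻ w in closedBall 0 ρ, ‖T w‖ₑ ∂μ := by
  have hpos : μ (closedBall 0 (ρ / 2)) ≠ 0 := (measure_closedBall_pos μ 0 (half_pos hρ)).ne'
  have hfin : μ (closedBall 0 (ρ / 2)) ≠ ∞ := measure_closedBall_lt_top.ne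
  refine ⟨(2 / ρ).toNNReal * (2 / μ (closedBall 0 (ρ / 2))).toNNReal, fun T ↦
    T.opENorm_le_bound fun v ↦ ?_⟩
  rcases eq_or_ne v 0 with rfl | hv
  · simp
  have hv_pos := norm_pos_iff.2 hv
  set w : E := (ρ / 2 / ‖v‖) • v with hw
  have hvw : v = (2 / ρ * ‖v‖) • w := by
    rw [hw, smul_smul]
    field_simp
    simp
  have hwρ : ‖w‖ ≤ ρ / 2 := by
    rw [norm_smul, Real.norm_of_nonneg (by positivity), div_mul_cancel₀ _ hv_pos.ne']
  have hTw : ‖T w‖ₑ ≤ 2 / μ (closedBall 0 (ρ / 2)) * ∫⁻ w in closedBall 0 ρ, ‖T w‖ₑ ∂μ := by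
    rw [ENNReal.mul_div_right_comm.symm]
    exact (ENNReal.le_div_iff_mul_le (.inl hpos) (.inl hfin)).2
      ((mul_comm _ _).trans_le (measure_closedBall_mul_enorm_apply_le μ T hwρ))
  have hTv : ‖T v‖ₑ = ENNReal.ofReal (2 / ρ) * ‖v‖ₑ * ‖T w‖ₑ := by
    nth_rw 1 [hvw]
    rw [map_smul, enorm_smul, enorm_mul, enorm_norm, Real.enorm_of_nonneg (by positivity)]
  rw [hTv, mul_right_comm, ENNReal.coe_mul,
    ENNReal.coe_toNNReal (ENNReal.div_ne_top (by simp) hpos)]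
  gcongr ?_ * _
  rw [mul_assoc]
  exact mul_le_mul' le_rfl hTw

theorem eLpNorm_comp_add_smul_closedBall [FiniteDimensional ℝ E] (g : E → F) (q : ℝ≥0∞)
    (x : E) (ρ : ℝ) {t : ℝ} (ht : 0 < t) :
    eLpNorm (fun w ↦ g (x + t • w)) q (μ.restrict (closedBall 0 ρ)) =
      .ofReal (t ^ (-(finrank ℝ E * q⁻¹.toReal))) *
        eLpNorm g q (μ.restrict (closedBall x (t * ρ))) := by
  let e : E → E := fun w ↦ x + t • w
  have he : MeasurableEmbedding e :=
    (Homeomorph.smulOfNeZero t ht.ne').trans (Homeomorph.addLeft x) |>.measurableEmbedding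
  have hmap : μ.map e = ENNReal.ofReal (t ^ (-(finrank ℝ E : ℝ))) • μ := by
    rw [show e = (x + ·) ∘ (t • ·) from rfl, ← Measure.map_map (by fun_prop) (by fun_prop),
      Measure.map_addHaar_smul μ ht.ne', Measure.map_smul, map_add_left_eq_self,
      abs_of_nonneg (by positivity), Real.rpow_neg ht.le, Real.rpow_natCast]
  have hball : e ⁻¹' closedBall x (t * ρ) = closedBall 0 ρ := by
    ext w
    simp [e, norm_smul, abs_of_pos ht, mul_le_mul_iff_right₀ ht]
  rw [show (fun w ↦ g (x + t • w)) = g ∘ e from rfl, ← he.eLpNorm_map_measure, ← hball,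
    ← he.restrict_map, hmap, Measure.restrict_smul,
    eLpNorm_smul_measure_of_ne_zero (by positivity), smul_eq_mul,
    ENNReal.ofReal_rpow_of_pos (by positivity), ← Real.rpow_mul ht.le, one_div, neg_mul]

theorem lintegral_Ioc_ofReal_rpow_lt_top {a : ℝ} (ha : -1 < a) :
    ∫⁻ t in Ioc (0 : ℝ) 1, .ofReal (t ^ a) < ∞ := by
  have hint : IntegrableOn (fun t : ℝ ↦ t ^ a) (Ioc 0 1) :=
    (intervalIntegrable_iff_integrableOn_Ioc_of_le zero_le_one).1
      (intervalIntegral.intervalIntegrable_rpow' ha)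
  exact hint.lintegral_lt_top

variable [FiniteDimensional ℝ E] {q : ℝ≥0∞}

theorem lintegral_closedBall_comp_add_smul_le (hq : 1 ≤ q) {g : E → F} (hg : Continuous g) (x : E)
    {ρ : ℝ} (hρ : 0 < ρ) {t : ℝ} (ht : t ∈ Ioc (0 : ℝ) 1) :
    ∫⁻ w in closedBall 0 ρ, ‖g (x + t • w)‖ₑ ∂μ ≤
      .ofReal (t ^ (-(finrank ℝ E * q⁻¹.toReal))) *
        (μ (closedBall 0 ρ) ^ (1 - q⁻¹.toReal) *
          eLpNorm g q (μ.restrict (closedBall x ρ))) := by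
  have hball : closedBall x (t * ρ) ⊆ closedBall x ρ :=
    closedBall_subset_closedBall (mul_le_of_le_one_left hρ.le ht.2)
  have hmeas : AEStronglyMeasurable (fun w ↦ g (x + t • w)) (μ.restrict (closedBall 0 ρ)) :=
    (by fun_prop : Continuous fun w ↦ g (x + t • w)).aestronglyMeasurable
  calc ∫⁻ w in closedBall 0 ρ, ‖g (x + t • w)‖ₑ ∂μ
      = eLpNorm (fun w ↦ g (x + t • w)) 1 (μ.restrict (closedBall 0 ρ)) :=
        eLpNorm_one_eq_lintegral_enorm.symm
    _ ≤ eLpNorm (fun w ↦ g (x + t • w)) q (μ.restrict (closedBall 0 ρ)) *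
          μ (closedBall 0 ρ) ^ (1 - q⁻¹.toReal) := by
        simpa [ENNReal.toReal_inv] using eLpNorm_le_eLpNorm_mul_rpow_measure_univ hq hmeas
    _ = .ofReal (t ^ (-(finrank ℝ E * q⁻¹.toReal))) * (μ (closedBall 0 ρ) ^ (1 - q⁻¹.toReal) *
          eLpNorm g q (μ.restrict (closedBall x (t * ρ)))) := by
        rw [eLpNorm_comp_add_smul_closedBall μ g q x ρ ht.1]
        ring
    _ ≤ _ := by gcongr

theorem exists_lintegral_lintegral_comp_add_smul_le (hq : 1 ≤ q) {n : ℕ}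
    (hn : -1 < sobolevNumber E n q) {ρ : ℝ} (hρ : 0 < ρ) :
    ∃ A : ℝ≥0, ∀ g : E → F, Continuous g → ∀ x : E,
      ∫⁻ w in closedBall 0 ρ,
          (∫⁻ t in Ioc (0 : ℝ) 1, .ofReal (t ^ n) * ‖g (x + t • w)‖ₑ) ∂μ ≤
        A * eLpNorm g q (μ.restrict (closedBall x ρ)) := by
  set V := μ (closedBall (0 : E) ρ) ^ (1 - q⁻¹.toReal)
  set K := ∫⁻ t in Ioc (0 : ℝ) 1, .ofReal (t ^ sobolevNumber E n q)
  have hV : V ≠ ∞ := ENNReal.rpow_ne_top_of_nonneg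
    (sub_nonneg.2 (ENNReal.toReal_le_of_le_ofReal zero_le_one (by simpa using hq)))
    measure_closedBall_lt_top.ne
  have hK : K ≠ ∞ := (lintegral_Ioc_ofReal_rpow_lt_top hn).ne
  refine ⟨(K * V).toNNReal, fun g hg x ↦ ?_⟩
  rw [ENNReal.coe_toNNReal (ENNReal.mul_ne_top hK hV)]
  set N := eLpNorm g q (μ.restrict (closedBall x ρ))
  have hswap :
      ∫⁻ w in closedBall 0 ρ,
        (∫⁻ t in Ioc (0 : ℝ) 1, .ofReal (t ^ n) * ‖g (x + t • w)‖ₑ) ∂μ =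
      ∫⁻ t in Ioc (0 : ℝ) 1, .ofReal (t ^ n) * ∫⁻ w in closedBall 0 ρ, ‖g (x + t • w)‖ₑ ∂μ := by
    have hmeas : Measurable fun p : E × ℝ ↦ ‖g (x + p.2 • p.1)‖ₑ :=
      (by fun_prop : Continuous fun p : E × ℝ ↦ ‖g (x + p.2 • p.1)‖ₑ).measurable
    rw [lintegral_lintegral_swap (Measurable.mul (by fun_prop) hmeas).aemeasurable]
    simp_rw [lintegral_const_mul' _ _ ENNReal.ofReal_ne_top]
  calc _ = _ := hswap
    _ ≤ ∫⁻ t in Ioc (0 : ℝ) 1, .ofReal (t ^ sobolevNumber E n q) * (V * N) := by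
        refine setLIntegral_mono' measurableSet_Ioc fun t ht ↦ ?_
        rw [sobolevNumber, sub_eq_add_neg, Real.rpow_add ht.1, Real.rpow_natCast,
          ENNReal.ofReal_mul (pow_nonneg ht.1.le n), mul_assoc]
        gcongr
        exact lintegral_closedBall_comp_add_smul_le μ hq hg x hρ ht
    _ = K * V * N := by
        rw [lintegral_mul_const _ (by fun_prop), mul_assoc]

theorem exists_enorm_fderiv_le_lintegral [NormedSpace ℝ F] [CompleteSpace F] (n : ℕ) {ρ : ℝ}
    (hρ : 0 < ρ) :
    ∃ A : ℝ≥0, ∀ f : E → F, ContDiff ℝ (n + 2 : ℕ) f → ∀ (x : E) (M : ℝ≥0∞),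
      (∀ y ∈ closedBall x ρ, ‖f y‖ₑ ≤ M) →
      ‖fderiv ℝ f x‖ₑ ≤ A * (M + ∫⁻ w in closedBall 0 ρ, (∫⁻ t in Ioc (0 : ℝ) 1,
        .ofReal (t ^ n) * ‖iteratedFDeriv ℝ (n + 2) f (x + t • w)‖ₑ) ∂μ) := by
  obtain ⟨A, hA⟩ := exists_enorm_fderiv_apply_le (E := E) (F := F) n ρ.toNNReal
  obtain ⟨B, hB⟩ := exists_enorm_le_mul_lintegral_closedBall (F := F) μ hρ
  set V := (μ (closedBall (0 : E) ρ)).toNNReal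
  refine ⟨B * A * (V + 1), fun f hf x M hM ↦ ?_⟩
  set J := fun w : E ↦ ∫⁻ t in Ioc (0 : ℝ) 1,
    .ofReal (t ^ n) * ‖iteratedFDeriv ℝ (n + 2) f (x + t • w)‖ₑ
  have hray : ∀ w ∈ closedBall (0 : E) ρ, ‖fderiv ℝ f x w‖ₑ ≤ A * (M + J w) := by
    intro w hw
    rw [mem_closedBall_zero_iff] at hw
    refine hA f hf x w M ?_ fun t ht ↦ hM _ ?_
    · rw [← ofReal_norm]
      exact ENNReal.ofReal_le_ofReal hw
    · rw [mem_closedBall_iff_norm, add_sub_cancel_left, norm_smul, Real.norm_of_nonneg ht.1]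
      exact (mul_le_of_le_one_left (norm_nonneg w) ht.2).trans hw
  have hV : ∫⁻ _ in closedBall (0 : E) ρ, M ∂μ = V * M := by
    rw [setLIntegral_const, ENNReal.coe_toNNReal measure_closedBall_lt_top.ne, mul_comm]
  calc ‖fderiv ℝ f x‖ₑ
      ≤ B * ∫⁻ w in closedBall 0 ρ, ‖fderiv ℝ f x w‖ₑ ∂μ := hB _
    _ ≤ B * ∫⁻ w in closedBall 0 ρ, A * (M + J w) ∂μ := by
        gcongr 1
        exact setLIntegral_mono' measurableSet_closedBall hray
    _ = B * A * (V * M + 1 * ∫⁻ w in closedBall 0 ρ, J w ∂μ) := by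
        rw [lintegral_const_mul' _ _ ENNReal.coe_ne_top, lintegral_add_left measurable_const, hV,
          one_mul, mul_assoc]
    _ ≤ (B * A * (V + 1) : ℝ≥0) * (M + ∫⁻ w in closedBall 0 ρ, J w ∂μ) := by
        push_cast
        rw [mul_assoc _ (V + 1 : ℝ≥0∞), mul_add (V + 1 : ℝ≥0∞)]
        gcongr
        · exact le_self_add
        · exact le_add_self

theorem exists_enorm_fderiv_le [NormedSpace ℝ F] [CompleteSpace F] (hq : 1 ≤ q) {m : ℕ}
    (hm : 1 < sobolevNumber E m q) {ρ : ℝ} (hρ : 0 < ρ) :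
    ∃ A : ℝ≥0, ∀ f : E → F, ContDiff ℝ m f → ∀ (x : E) (M : ℝ≥0∞),
      (∀ y ∈ closedBall x ρ, ‖f y‖ₑ ≤ M) →
      ‖fderiv ℝ f x‖ₑ ≤
        A * (M + eLpNorm (iteratedFDeriv ℝ m f) q (μ.restrict (closedBall x ρ))) := by
  have hm₁ : 1 < m := by exact_mod_cast hm.trans_le (sobolevNumber_le E m q)
  obtain ⟨n, rfl⟩ := Nat.exists_eq_add_of_le' hm₁
  have hn : -1 < sobolevNumber E n q := by
    rw [sobolevNumber_add] at hm
    push_cast at hm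
    linarith
  obtain ⟨A, hA⟩ := exists_enorm_fderiv_le_lintegral (F := F) μ n hρ
  obtain ⟨K, hK⟩ := exists_lintegral_lintegral_comp_add_smul_le (F := E [×(n + 2)]→L[ℝ] F)
    μ hq hn hρ
  refine ⟨A * (1 + K), fun f hf x M hM ↦ (hA f hf x M hM).trans ?_⟩
  push_cast
  rw [mul_assoc, add_mul, one_mul]
  gcongr
  · exact le_self_add
  · exact (hK _ (hf.continuous_iteratedFDeriv le_rfl) x).trans (by gcongr; exact le_add_self)

end Average

theorem le_two_mul_rpow_mul_rpow_add {X M N R s a : ℝ} (hM : 0 ≤ M) (hN : 0 ≤ N) (hR : 0 < R)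
    (hs : 0 ≤ s) (hsa : s < a) (hX : ∀ r ∈ Ioc 0 R, X ≤ M * r ^ (-s) + N * r ^ (a - s)) :
    X ≤ 2 * (M ^ (1 - s / a) * N ^ (s / a) + M * R ^ (-s)) := by
  have ha : 0 < a := hs.trans_lt hsa
  have hinterp : 0 ≤ M ^ (1 - s / a) * N ^ (s / a) := by positivity
  have hboundary : 0 ≤ M * R ^ (-s) := by positivity
  rcases le_or_gt (N * R ^ a) M with hlarge | hsmall
  · have hN_le : N * R ^ (a - s) ≤ M * R ^ (-s) := by
      rw [sub_eq_add_neg, Real.rpow_add hR, ← mul_assoc]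
      gcongr
    linarith [hX R ⟨hR, le_rfl⟩]
  have hN₀ : 0 < N := pos_of_mul_pos_left (hM.trans_lt hsmall) (by positivity)
  rcases hM.eq_or_lt with rfl | hM₀
  · have hlim : Filter.Tendsto (fun r : ℝ ↦ N * r ^ (a - s)) (nhdsWithin 0 (Ioi 0)) (nhds 0) := by
      have := (Real.continuousAt_rpow_const 0 (a - s) (.inr (sub_pos.2 hsa).le)).tendsto.const_mul N
      rw [Real.zero_rpow (sub_pos.2 hsa).ne', mul_zero] at this
      exact this.mono_left nhdsWithin_le_nhds
    have hX₀ : X ≤ 0 := ge_of_tendsto hlim <| by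
      filter_upwards [Ioc_mem_nhdsGT hR] with r hr
      simpa only [zero_mul, zero_add] using hX r hr
    linarith
  -- The two terms of the hypothesis balance at `r ^ a = M / N`.
  set r := (M / N) ^ a⁻¹
  have hr : 0 < r := by positivity
  have hrR : r ≤ R := by
    rw [Real.rpow_inv_le_iff_of_pos (by positivity) hR.le ha, div_le_iff₀ hN₀, mul_comm]
    exact hsmall.le
  have hNr : N * r ^ a = M := by
    rw [Real.rpow_inv_rpow (by positivity) ha.ne', mul_div_cancel₀ _ hN₀.ne']
  have hbalance : N * r ^ (a - s) = M * r ^ (-s) := by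
    rw [sub_eq_add_neg, Real.rpow_add hr, ← mul_assoc, hNr]
  have hvalue : M * r ^ (-s) = M ^ (1 - s / a) * N ^ (s / a) := by
    rw [← Real.rpow_mul (by positivity), inv_mul_eq_div, neg_div,
      Real.rpow_neg (by positivity), Real.div_rpow hM hN, inv_div, Real.rpow_sub hM₀, Real.rpow_one]
    field_simp
  linarith [hX r ⟨hr, hrR⟩]

section IteratedFDeriv

variable {E F : Type*} [NormedAddCommGroup E] [NormedSpace ℝ E]
  [NormedAddCommGroup F] [NormedSpace ℝ F]

theorem norm_iteratedFDeriv_iteratedFDeriv (f : E → F) (k i : ℕ) (x : E) :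
    ‖iteratedFDeriv ℝ k (iteratedFDeriv ℝ i f) x‖ = ‖iteratedFDeriv ℝ (k + i) f x‖ := by
  induction i generalizing k with
  | zero => rw [iteratedFDeriv_zero_eq_comp, LinearIsometryEquiv.norm_iteratedFDeriv_comp_left,
      add_zero]
  | succ i ih =>
    rw [← add_assoc, add_right_comm, ← ih, ← norm_iteratedFDeriv_fderiv, fderiv_iteratedFDeriv]
    exact (LinearIsometryEquiv.norm_iteratedFDeriv_comp_left _ _ _ _).symm

theorem norm_iteratedFDeriv_comp_add_smul {f : E → F} {k : ℕ} (hf : ContDiff ℝ k f) (x w : E)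
    {r : ℝ} (hr : 0 ≤ r) :
    ‖iteratedFDeriv ℝ k (fun w ↦ f (x + r • w)) w‖ =
      r ^ k * ‖iteratedFDeriv ℝ k f (x + r • w)‖ := by
  have hcomp : iteratedFDeriv ℝ k (fun w ↦ f (x + r • w)) w =
      r ^ k • iteratedFDeriv ℝ k f (x + r • w) := by
    rw [iteratedFDeriv_comp_const_smul (f := fun y ↦ f (x + y)) r (by fun_prop)]
    exact congrArg _ (iteratedFDeriv_comp_add_left k x (r • w))
  rw [hcomp, norm_smul, Real.norm_of_nonneg (by positivity)]

variable [FiniteDimensional ℝ E] [MeasurableSpace E] [BorelSpace E]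
  (μ : Measure E) [μ.IsAddHaarMeasure]

theorem eLpNorm_iteratedFDeriv_comp_add_smul_closedBall {f : E → F} {m : ℕ} (hf : ContDiff ℝ m f)
    (q : ℝ≥0∞) (x : E) (ρ : ℝ) {r : ℝ} (hr : 0 < r) :
    eLpNorm (iteratedFDeriv ℝ m (fun w ↦ f (x + r • w))) q (μ.restrict (closedBall 0 ρ)) =
      .ofReal (r ^ sobolevNumber E m q) *
        eLpNorm (iteratedFDeriv ℝ m f) q (μ.restrict (closedBall x (r * ρ))) := by
  calc eLpNorm (iteratedFDeriv ℝ m (fun w ↦ f (x + r • w))) q (μ.restrict (closedBall 0 ρ))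
      = eLpNorm (r ^ m • fun w ↦ ‖iteratedFDeriv ℝ m f (x + r • w)‖) q
          (μ.restrict (closedBall 0 ρ)) := by
        refine eLpNorm_congr_norm_ae (.of_forall fun w ↦ ?_)
        rw [norm_iteratedFDeriv_comp_add_smul hf x w hr.le, Pi.smul_apply, norm_smul, norm_norm,
          Real.norm_of_nonneg (by positivity)]
    _ = .ofReal (r ^ m) * (.ofReal (r ^ (-(finrank ℝ E * q⁻¹.toReal))) *
          eLpNorm (iteratedFDeriv ℝ m f) q (μ.restrict (closedBall x (r * ρ)))) := by
        rw [eLpNorm_const_smul, Real.enorm_of_nonneg (by positivity), eLpNorm_norm,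
          eLpNorm_comp_add_smul_closedBall μ _ q x ρ hr]
    _ = _ := by
        rw [← mul_assoc, ← ENNReal.ofReal_mul (by positivity), ← Real.rpow_natCast,
          ← Real.rpow_add hr, sobolevNumber, sub_eq_add_neg]

variable [CompleteSpace F] {q : ℝ≥0∞}

theorem exists_enorm_iteratedFDeriv_le (hq : 1 ≤ q) {i m : ℕ}
    (hi : i < sobolevNumber E m q) {ρ : ℝ} (hρ : 0 < ρ) :
    ∃ A : ℝ≥0, ∀ f : E → F, ContDiff ℝ m f → ∀ (x : E) (M : ℝ≥0∞),
      (∀ y ∈ closedBall x ρ, ‖f y‖ₑ ≤ M) →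
      ‖iteratedFDeriv ℝ i f x‖ₑ ≤
        A * (M + eLpNorm (iteratedFDeriv ℝ m f) q (μ.restrict (closedBall x ρ))) := by
  induction i generalizing ρ with
  | zero =>
    refine ⟨1, fun f _ x M hM ↦ ?_⟩
    rw [ENNReal.coe_one, one_mul, ← ofReal_norm, norm_iteratedFDeriv_zero, ofReal_norm]
    exact (hM x (mem_closedBall_self hρ.le)).trans le_self_add
  | succ i ih =>
    push_cast at hi
    have hρ₂ : 0 < ρ / 2 := half_pos hρ
    have him : i < m := by
      exact_mod_cast (lt_add_one (i : ℝ)).trans (hi.trans_le (sobolevNumber_le E m q))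
    obtain ⟨k, rfl⟩ := Nat.exists_eq_add_of_le' him.le
    obtain ⟨A, hA⟩ := ih ((lt_add_one (i : ℝ)).trans hi) hρ₂
    obtain ⟨B, hB⟩ := exists_enorm_fderiv_le (F := E [×i]→L[ℝ] F) μ hq (m := k)
      (by rw [sobolevNumber_add] at hi; linarith) hρ₂
    refine ⟨B * (A + 1), fun f hf x M hM ↦ ?_⟩
    set N := eLpNorm (iteratedFDeriv ℝ (k + i) f) q (μ.restrict (closedBall x ρ))
    have hlower : ∀ y ∈ closedBall x (ρ / 2), ‖iteratedFDeriv ℝ i f y‖ₑ ≤ A * (M + N) := by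
      intro y hy
      have hball : closedBall y (ρ / 2) ⊆ closedBall x ρ :=
        closedBall_subset_closedBall' (by linarith [mem_closedBall.1 hy])
      refine (hA f hf y M fun z hz ↦ hM z (hball hz)).trans ?_
      gcongr
      exact eLpNorm_mono_measure _ (Measure.restrict_mono hball le_rfl)
    have hupper : eLpNorm (iteratedFDeriv ℝ k (iteratedFDeriv ℝ i f)) q
        (μ.restrict (closedBall x (ρ / 2))) ≤ N := by
      rw [eLpNorm_congr_norm_ae (.of_forall (norm_iteratedFDeriv_iteratedFDeriv f k i))]
      exact eLpNorm_mono_measure _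
        (Measure.restrict_mono (closedBall_subset_closedBall (by linarith)) le_rfl)
    calc ‖iteratedFDeriv ℝ (i + 1) f x‖ₑ
        = ‖fderiv ℝ (iteratedFDeriv ℝ i f) x‖ₑ := by
          rw [← ofReal_norm, ← ofReal_norm, norm_fderiv_iteratedFDeriv]
      _ ≤ B * (A * (M + N) + N) := by
          refine (hB _ (hf.iteratedFDeriv_right (by norm_cast)) x _ hlower).trans ?_
          gcongr
      _ ≤ (B * (A + 1) : ℝ≥0) * (M + N) := by
          push_cast
          rw [mul_assoc, add_mul, one_mul]
          gcongr
          exact le_add_self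

theorem exists_norm_iteratedFDeriv_le_rpow (hq : 1 ≤ q) {i m : ℕ}
    (hi : i < sobolevNumber E m q) :
    ∃ A : ℝ≥0, ∀ f : E → F, ContDiff ℝ m f → ∀ (x : E) {r M N : ℝ}, 0 < r → 0 ≤ N →
      (∀ y ∈ closedBall x r, ‖f y‖ ≤ M) →
      eLpNorm (iteratedFDeriv ℝ m f) q (μ.restrict (closedBall x r)) ≤ .ofReal N →
      ‖iteratedFDeriv ℝ i f x‖ ≤
        A * (M * r ^ (-i : ℝ) + N * r ^ (sobolevNumber E m q - i)) := by
  have him : i ≤ m := by exact_mod_cast (hi.trans_le (sobolevNumber_le E m q)).le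
  set a := sobolevNumber E m q
  obtain ⟨A, hA⟩ := exists_enorm_iteratedFDeriv_le (F := F) μ hq hi one_pos
  refine ⟨A, fun f hf x r M N hr hN hM hDN ↦ ?_⟩
  have hM₀ : 0 ≤ M := (norm_nonneg _).trans (hM x (mem_closedBall_self hr.le))
  have hball : ∀ w ∈ closedBall (0 : E) 1, ‖f (x + r • w)‖ₑ ≤ .ofReal M := by
    intro w hw
    rw [← ofReal_norm]
    refine ENNReal.ofReal_le_ofReal (hM _ ?_)
    rw [mem_closedBall_iff_norm, add_sub_cancel_left, norm_smul, Real.norm_of_nonneg hr.le]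
    exact mul_le_of_le_one_right hr.le (mem_closedBall_zero_iff.1 hw)
  have hrescaled : r ^ i * ‖iteratedFDeriv ℝ i f x‖ ≤ A * (M + r ^ a * N) := by
    rw [← ENNReal.ofReal_le_ofReal_iff (by positivity)]
    calc ENNReal.ofReal (r ^ i * ‖iteratedFDeriv ℝ i f x‖)
        = ‖iteratedFDeriv ℝ i (fun w ↦ f (x + r • w)) 0‖ₑ := by
          rw [← ofReal_norm, norm_iteratedFDeriv_comp_add_smul (hf.of_le (mod_cast him)) x 0 hr.le,
            smul_zero, add_zero]
      _ ≤ A * (.ofReal M + .ofReal (r ^ a) * .ofReal N) := by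
          refine (hA _ (by fun_prop) 0 _ hball).trans ?_
          rw [eLpNorm_iteratedFDeriv_comp_add_smul_closedBall μ hf q x 1 hr, mul_one]
          gcongr
      _ = .ofReal (A * (M + r ^ a * N)) := by
          rw [← ENNReal.ofReal_mul (by positivity), ENNReal.ofReal_mul A.coe_nonneg,
            ENNReal.ofReal_coe_nnreal, ENNReal.ofReal_add hM₀ (by positivity)]
  calc ‖iteratedFDeriv ℝ i f x‖
      = (r ^ i * ‖iteratedFDeriv ℝ i f x‖) * (r ^ i)⁻¹ := by field_simp
    _ ≤ A * (M + r ^ a * N) * (r ^ i)⁻¹ := by gcongr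
    _ = A * (M * r ^ (-i : ℝ) + N * r ^ (a - i)) := by
        rw [Real.rpow_sub hr, Real.rpow_neg hr.le, Real.rpow_natCast]
        ring

theorem exists_norm_iteratedFDeriv_le_closedBall (hq : 1 ≤ q) {i m : ℕ}
    (hi : i < sobolevNumber E m q) :
    ∃ A : ℝ, 0 < A ∧ ∀ f : E → F, ContDiff ℝ m f → ∀ (x : E) {R M N : ℝ}, 0 < R → 0 ≤ N →
      (∀ y ∈ closedBall x R, ‖f y‖ ≤ M) →
      eLpNorm (iteratedFDeriv ℝ m f) q (μ.restrict (closedBall x R)) ≤ .ofReal N →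
      ‖iteratedFDeriv ℝ i f x‖ ≤ A * (M ^ (1 - i / sobolevNumber E m q) *
        N ^ (i / sobolevNumber E m q) + M * R ^ (-i : ℝ)) := by
  obtain ⟨A, hA⟩ := exists_norm_iteratedFDeriv_le_rpow (F := F) μ hq hi
  have hA₁ : (0 : ℝ) < A + 1 := by positivity
  refine ⟨(A + 1) * 2, by positivity, fun f hf x R M N hR hN hM hDN ↦ ?_⟩
  have hM₀ : 0 ≤ M := (norm_nonneg _).trans (hM x (mem_closedBall_self hR.le))
  rw [mul_assoc, ← div_le_iff₀' hA₁]
  refine le_two_mul_rpow_mul_rpow_add hM₀ hN hR (Nat.cast_nonneg i) hi fun r ⟨hr, hrR⟩ ↦ ?_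
  have hball : closedBall x r ⊆ closedBall x R := closedBall_subset_closedBall hrR
  rw [div_le_iff₀' hA₁]
  refine (hA f hf x hr hN (fun y hy ↦ hM y (hball hy)) ?_).trans ?_
  · exact (eLpNorm_mono_measure _ (Measure.restrict_mono hball le_rfl)).trans hDN
  · gcongr
    exact le_add_of_nonneg_right zero_le_one

end IteratedFDeriv

section DyadicWeight

variable {E : Type*} [NormedAddCommGroup E]

/-- The decomposition of a normed space into a unit ball (index `0`) and the closed dyadic annuli
`2 ^ j ≤ ‖x‖ ≤ 2 ^ (j + 1)` (index `j + 1`). Consecutive shells share a sphere. -/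
def dyadicShell (E : Type*) [NormedAddCommGroup E] : ℕ → Set E
  | 0 => {x | ‖x‖ ≤ 1}
  | j + 1 => {x | 2 ^ j ≤ ‖x‖ ∧ ‖x‖ ≤ 2 ^ (j + 1)}

/-- A weight that is comparable, up to the factor `C`, to the constant `v k` on the `k`-th dyadic
shell. -/
def IsDyadicWeight (φ : E → ℝ) (v : ℕ → ℝ) (C : ℝ) : Prop :=
  ∀ k, ∀ x ∈ dyadicShell E k, φ x ∈ Icc (v k / C) (C * v k)

theorem isDyadicWeight_iff {φ : E → ℝ} {v : ℕ → ℝ} {C : ℝ} :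
    IsDyadicWeight φ v C ↔ (∀ x, ‖x‖ ≤ 1 → φ x ∈ Icc (v 0 / C) (C * v 0)) ∧
      ∀ j x, 2 ^ j ≤ ‖x‖ → ‖x‖ ≤ 2 ^ (j + 1) → φ x ∈ Icc (v (j + 1) / C) (C * v (j + 1)) := by
  refine ⟨fun h ↦ ⟨h 0, fun j x hx hx' ↦ h (j + 1) x ⟨hx, hx'⟩⟩, fun ⟨h₀, h₁⟩ ↦ ?_⟩
  rintro (_ | j) x hx
  · exact h₀ x hx
  · exact h₁ j x hx.1 hx.2

theorem exists_mem_dyadicShell (x : E) : ∃ k, x ∈ dyadicShell E k := by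
  rcases le_or_gt ‖x‖ 1 with hx | hx
  · exact ⟨0, hx⟩
  · obtain ⟨j, hj, hj'⟩ := exists_nat_pow_near hx.le one_lt_two
    exact ⟨j + 1, hj, hj'.le⟩

theorem norm_le_of_mem_dyadicShell {x : E} {k : ℕ} (hx : x ∈ dyadicShell E k) : ‖x‖ ≤ 2 ^ k := by
  cases k with
  | zero => exact hx.trans_eq (pow_zero 2).symm
  | succ j => exact hx.2

theorem two_mul_norm_le_of_mem_dyadicShell {x y : E} {j k : ℕ} (hx : x ∈ dyadicShell E j)
    (hy : y ∈ dyadicShell E (k + 1)) (hjk : j < k) : 2 * ‖x‖ ≤ ‖y‖ := by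
  calc 2 * ‖x‖ ≤ 2 ^ (j + 1) := by
        rw [pow_succ']
        gcongr
        exact norm_le_of_mem_dyadicShell hx
    _ ≤ 2 ^ k := pow_le_pow_right₀ one_le_two hjk
    _ ≤ ‖y‖ := hy.1

theorem dyadicShell_inter_succ_nonempty [NormedSpace ℝ E] {y : E} {k : ℕ}
    (hy : y ∈ dyadicShell E (k + 1)) : (dyadicShell E k ∩ dyadicShell E (k + 1)).Nonempty := by
  have hy₀ : y ≠ 0 := norm_pos_iff.1 <| (by positivity : (0 : ℝ) < 2 ^ k).trans_le hy.1
  have hz : ‖(2 ^ k / ‖y‖) • y‖ = 2 ^ k := by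
    rw [norm_smul, Real.norm_of_nonneg (by positivity), div_mul_cancel₀ _ (norm_ne_zero_iff.2 hy₀)]
  refine ⟨(2 ^ k / ‖y‖) • y, ?_, hz.ge, hz.le.trans (pow_le_pow_right₀ one_le_two k.le_succ)⟩
  cases k with
  | zero => exact hz.le.trans_eq (pow_zero 2)
  | succ j => exact ⟨(pow_le_pow_right₀ one_le_two j.le_succ).trans hz.ge, hz.le⟩

theorem dyadicShell_inter_nonempty [NormedSpace ℝ E] {x y : E} {j k : ℕ}
    (hx : x ∈ dyadicShell E j) (hy : y ∈ dyadicShell E k)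
    (hxy : ‖y - x‖ ≤ √(1 + ‖x‖ ^ 2) / 4) : (dyadicShell E j ∩ dyadicShell E k).Nonempty := by
  have hsqrt : √(1 + ‖x‖ ^ 2) ≤ 1 + ‖x‖ := Real.sqrt_le_iff.2
    ⟨by positivity, by linarith [add_sq 1 ‖x‖, norm_nonneg x]⟩
  have hxy_norm : ‖x‖ - ‖y‖ ≤ ‖y - x‖ := norm_sub_rev x y ▸ norm_sub_norm_le x y
  have hyx_norm : ‖y‖ - ‖x‖ ≤ ‖y - x‖ := norm_sub_norm_le y x
  have one_lt {n : ℕ} {z : E} (hz : z ∈ dyadicShell E (n + 1)) (hn : 0 < n) : 1 < ‖z‖ :=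
    (one_lt_pow₀ one_lt_two hn.ne').trans_le hz.1
  rcases lt_trichotomy j k with hjk | rfl | hkj
  · obtain ⟨n, rfl⟩ := Nat.exists_eq_add_one_of_ne_zero (Nat.ne_zero_of_lt hjk)
    rcases (Nat.lt_succ_iff.1 hjk).eq_or_lt with rfl | hjn
    · exact dyadicShell_inter_succ_nonempty hy
    · linarith [two_mul_norm_le_of_mem_dyadicShell hx hy hjn, one_lt hy (Nat.zero_lt_of_lt hjn)]
  · exact ⟨x, hx, hx⟩
  · obtain ⟨n, rfl⟩ := Nat.exists_eq_add_one_of_ne_zero (Nat.ne_zero_of_lt hkj)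
    rcases (Nat.lt_succ_iff.1 hkj).eq_or_lt with rfl | hkn
    · exact inter_comm _ _ ▸ dyadicShell_inter_succ_nonempty hx
    · linarith [two_mul_norm_le_of_mem_dyadicShell hy hx hkn, one_lt hx (Nat.zero_lt_of_lt hkn)]

variable {φ : E → ℝ} {v : ℕ → ℝ} {C : ℝ}

theorem IsDyadicWeight.le_of_mem (hφ : IsDyadicWeight φ v C) (hC : 0 < C) {k : ℕ} {x y : E}
    (hx : x ∈ dyadicShell E k) (hy : y ∈ dyadicShell E k) : φ x ≤ C ^ 2 * φ y := by
  have hv : v k ≤ C * φ y := (div_le_iff₀' hC).1 (hφ k y hy).1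
  calc φ x ≤ C * v k := (hφ k x hx).2
    _ ≤ C * (C * φ y) := by gcongr
    _ = C ^ 2 * φ y := by ring

theorem IsDyadicWeight.le_of_norm_sub_le [NormedSpace ℝ E] (hφ : IsDyadicWeight φ v C) (hC : 0 < C)
    {x y : E} (hxy : ‖y - x‖ ≤ √(1 + ‖x‖ ^ 2) / 4) : φ x ≤ C ^ 4 * φ y := by
  obtain ⟨j, hx⟩ := exists_mem_dyadicShell x
  obtain ⟨k, hy⟩ := exists_mem_dyadicShell y
  obtain ⟨z, hzj, hzk⟩ := dyadicShell_inter_nonempty hx hy hxy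
  calc φ x ≤ C ^ 2 * φ z := hφ.le_of_mem hC hx hzj
    _ ≤ C ^ 2 * (C ^ 2 * φ y) := by
        gcongr
        exact hφ.le_of_mem hC hzk hy
    _ = C ^ 4 * φ y := by ring

end DyadicWeight

section LpNorm

variable {X F : Type*} [MeasurableSpace X] [NormedAddCommGroup F]

theorem eLpNorm_restrict_le_mul_eLpNorm_mul_norm {s : Set X} (hs : MeasurableSet s) {w : X → ℝ}
    {c : ℝ} (hc : 0 ≤ c) (hw : ∀ y ∈ s, 1 ≤ c * w y) (g : X → F) (q : ℝ≥0∞) (μ : Measure X) :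
    eLpNorm g q (μ.restrict s) ≤ .ofReal c * eLpNorm (fun y ↦ w y * ‖g y‖) q μ := by
  refine (eLpNorm_le_mul_eLpNorm_of_ae_le_mul (g := fun y ↦ w y * ‖g y‖) ?_ q).trans
    (by gcongr; exact Measure.restrict_le_self)
  filter_upwards [ae_restrict_mem hs] with y hy
  calc ‖g y‖ ≤ (c * w y) * ‖g y‖ := le_mul_of_one_le_left (norm_nonneg _) (hw y hy)
    _ = c * (w y * ‖g y‖) := mul_assoc _ _ _
    _ ≤ c * ‖w y * ‖g y‖‖ := by gcongr; exact le_abs_self _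

theorem enorm_le_eLpNorm_top [TopologicalSpace X] {f : X → F} (hf : Continuous f) (μ : Measure X)
    [μ.IsOpenPosMeasure] (x : X) : ‖f x‖ₑ ≤ eLpNorm f ⊤ μ := by
  have hdense : Dense {y | ‖f y‖ₑ ≤ eLpNorm f ⊤ μ} := Measure.dense_of_ae <| by
    rw [eLpNorm_exponent_top]
    exact ae_le_eLpNormEssSup
  have hclosed : IsClosed {y | ‖f y‖ₑ ≤ eLpNorm f ⊤ μ} := isClosed_le hf.enorm continuous_const
  exact hclosed.closure_subset (hdense x)

theorem norm_le_toReal_eLpNorm_top [TopologicalSpace X] {f : X → F} (hf : Continuous f)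
    {μ : Measure X} [μ.IsOpenPosMeasure] (hμ : eLpNorm f ⊤ μ ≠ ⊤) (x : X) :
    ‖f x‖ ≤ (eLpNorm f ⊤ μ).toReal := by
  rw [← toReal_enorm]
  exact ENNReal.toReal_mono hμ (enorm_le_eLpNorm_top hf μ x)

end LpNorm

section GagliardoNirenberg

variable {E F : Type*} [NormedAddCommGroup E] [NormedSpace ℝ E]
  [MeasurableSpace E] [BorelSpace E] [NormedAddCommGroup F] (μ : Measure E) {q : ℝ≥0∞}

theorem IsDyadicWeight.eLpNorm_restrict_closedBall_le {φ : E → ℝ} {v : ℕ → ℝ} {C : ℝ}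
    (hφ : IsDyadicWeight φ v C) (hC : 0 < C) {x : E} (hx : 0 < φ x) (m : ℕ) (g : E → F) :
    eLpNorm g q (μ.restrict (closedBall x (√(1 + ‖x‖ ^ 2) / 4))) ≤
      .ofReal ((C ^ 4 / φ x) ^ m) * eLpNorm (fun y ↦ φ y ^ m * ‖g y‖) q μ := by
  refine eLpNorm_restrict_le_mul_eLpNorm_mul_norm measurableSet_closedBall (by positivity)
    (fun y hy ↦ ?_) g q μ
  rw [← mul_pow, div_mul_eq_mul_div]
  exact one_le_pow₀ ((one_le_div hx).2 (hφ.le_of_norm_sub_le hC (mem_closedBall_iff_norm.1 hy)))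

variable [NormedSpace ℝ F] [CompleteSpace F] [FiniteDimensional ℝ E] [μ.IsAddHaarMeasure]

theorem stmt6_general (hq : 1 ≤ q) {i m : ℕ} (hi : i < sobolevNumber E m q) {C : ℝ} (hC : 0 < C) :
    ∃ C' : ℝ, 0 < C' ∧ ∀ (f : E → F) (φ : E → ℝ) (v : ℕ → ℝ), ContDiff ℝ m f →
      eLpNorm f ⊤ μ ≠ ⊤ → IsDyadicWeight φ v C →
      eLpNorm (fun x ↦ φ x ^ m * ‖iteratedFDeriv ℝ m f x‖) q μ ≠ ⊤ →
      ∀ x, 0 < φ x → ‖iteratedFDeriv ℝ i f x‖ ≤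
        C' * ((eLpNorm f ⊤ μ).toReal ^ (1 - i / sobolevNumber E m q) *
            (eLpNorm (fun x ↦ φ x ^ m * ‖iteratedFDeriv ℝ m f x‖) q μ).toReal ^
              (i / sobolevNumber E m q) * φ x ^ (-m * (i / sobolevNumber E m q)) +
          (eLpNorm f ⊤ μ).toReal * √(1 + ‖x‖ ^ 2) ^ (-i : ℝ)) := by
  set θ := i / sobolevNumber E m q
  obtain ⟨A, hA, hlocal⟩ := exists_norm_iteratedFDeriv_le_closedBall (F := F) μ hq hi
  refine ⟨A * (((C ^ 4) ^ m) ^ θ + 4 ^ i), by positivity, fun f φ v hf hfμ hφ hDf x hx ↦ ?_⟩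
  set M := (eLpNorm f ⊤ μ).toReal
  set W := (eLpNorm (fun x ↦ φ x ^ m * ‖iteratedFDeriv ℝ m f x‖) q μ).toReal with hW
  set X := √(1 + ‖x‖ ^ 2)
  have hball : eLpNorm (iteratedFDeriv ℝ m f) q (μ.restrict (closedBall x (X / 4))) ≤
      .ofReal ((C ^ 4 / φ x) ^ m * W) := by
    rw [ENNReal.ofReal_mul (by positivity), hW, ENNReal.ofReal_toReal hDf]
    exact hφ.eLpNorm_restrict_closedBall_le μ hC hx m _
  have hweight : ((C ^ 4 / φ x) ^ m * W) ^ θ = ((C ^ 4) ^ m) ^ θ * (W ^ θ * φ x ^ (-m * θ)) := by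
    rw [Real.mul_rpow (by positivity) (by positivity), div_pow,
      Real.div_rpow (by positivity) (by positivity), neg_mul, Real.rpow_neg hx.le,
      Real.rpow_mul hx.le, Real.rpow_natCast]
    ring
  have hradius : (X / 4) ^ (-i : ℝ) = 4 ^ i * X ^ (-i : ℝ) := by
    rw [Real.div_rpow (by positivity) (by positivity), Real.rpow_neg zero_le_four,
      Real.rpow_natCast, div_inv_eq_mul, mul_comm]
  calc ‖iteratedFDeriv ℝ i f x‖
      ≤ A * (M ^ (1 - θ) * ((C ^ 4 / φ x) ^ m * W) ^ θ + M * (X / 4) ^ (-i : ℝ)) :=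
        hlocal f hf x (by positivity) (by positivity)
          (fun y _ ↦ norm_le_toReal_eLpNorm_top hf.continuous hfμ y) hball
    _ = A * (((C ^ 4) ^ m) ^ θ * (M ^ (1 - θ) * W ^ θ * φ x ^ (-m * θ)) +
          4 ^ i * (M * X ^ (-i : ℝ))) := by
        rw [hweight, hradius]
        ring
    _ ≤ A * ((((C ^ 4) ^ m) ^ θ + 4 ^ i) * (M ^ (1 - θ) * W ^ θ * φ x ^ (-m * θ)) +
          (((C ^ 4) ^ m) ^ θ + 4 ^ i) * (M * X ^ (-i : ℝ))) := by
        gcongr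
        · exact le_add_of_nonneg_right (by positivity)
        · exact le_add_of_nonneg_left (by positivity)
    _ = _ := by ring

end GagliardoNirenberg

/-- pointwise (L^∞-target) weighted Gagliardo–Nirenberg inequality on `ℝ^d`, with
`p = ∞`, `q = 2`, `ψ ≡ 1`, `θ = i/(m − d/2)`, and weight `φ` comparable to constants `φ_j` on
each dyadic annulus (index `j = −1` corresponding to index `0` of the sequence `φv`, and
`j ≥ 0` to index `j + 1`). The constant `C′` depends only on `d, i, m, C`, not on `f` or `φ`. -/
theorem stmt6 (d i m : ℕ) (hd : 1 ≤ d) (hi : 1 ≤ i) (him : i ≤ m)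
    (hstrict : (i : ℝ) < (m : ℝ) - (d : ℝ) / 2)
    (Cw : ℝ) (hCw : 1 ≤ Cw) :
    ∃ C' : ℝ, 0 < C' ∧
      ∀ (f φ : EuclideanSpace ℝ (Fin d) → ℝ) (φv : ℕ → ℝ),
        ContDiff ℝ (⊤ : ℕ∞) f →
        (∃ B : ℝ, ∀ x, |f x| ≤ B) →
        (∀ x, 0 ≤ φ x) →
        φv 0 = 1 → φv 1 = 1 →
        (∀ x : EuclideanSpace ℝ (Fin d), ‖x‖ ≤ 1 →
          φ x ∈ Set.Icc (φv 0 / Cw) (Cw * φv 0)) →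
        (∀ (j : ℕ) (x : EuclideanSpace ℝ (Fin d)),
          (2 : ℝ) ^ j ≤ ‖x‖ → ‖x‖ ≤ (2 : ℝ) ^ (j + 1) →
          φ x ∈ Set.Icc (φv (j + 1) / Cw) (Cw * φv (j + 1))) →
        eLpNorm (fun x => φ x ^ m * ‖iteratedFDeriv ℝ m f x‖) 2 volume < ⊤ →
        ∀ x : EuclideanSpace ℝ (Fin d), 0 < φ x →
          ‖iteratedFDeriv ℝ i f x‖ ≤
            C' * ((eLpNorm f ⊤ volume).toReal ^ (1 - (i : ℝ) / ((m : ℝ) - (d : ℝ) / 2)) *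
                  (eLpNorm (fun x => φ x ^ m * ‖iteratedFDeriv ℝ m f x‖) 2 volume).toReal ^
                    ((i : ℝ) / ((m : ℝ) - (d : ℝ) / 2)) *
                  φ x ^ (-(m : ℝ) * ((i : ℝ) / ((m : ℝ) - (d : ℝ) / 2)))
                + (eLpNorm f ⊤ volume).toReal * Real.sqrt (1 + ‖x‖ ^ 2) ^ (-(i : ℝ))) := by
  rw [← sobolevNumber_euclideanSpace_two] at hstrict ⊢
  obtain ⟨C', hC', hbound⟩ := stmt6_general (F := ℝ) volume one_le_two hstrict
    (one_pos.trans_le hCw)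
  refine ⟨C', hC', fun f φ φv hf ⟨B, hB⟩ _ _ _ hball hannulus hDf ↦ ?_⟩
  have hfB := memLp_top_of_bound hf.continuous.aestronglyMeasurable (μ := volume) B (.of_forall hB)
  exact hbound f φ φv (hf.of_le (mod_cast le_top)) hfB.eLpNorm_ne_top
    (isDyadicWeight_iff.2 ⟨hball, hannulus⟩) hDf.ne
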